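/- Let (J, B) be a pseudo-euclidean Jordan algebra over a field K of characteristic zero. Then J admits a symplectic form ω if and only if there exists a bijective B-antisymmetric derivation D of J; more precisely, for every symplectic form ω on J there is a bijective B-antisymmetric derivation D with ω(x, y) = B(D(x), y) for all x, y ∈ J, and conversely for every bijective B-antisymmetric derivation D of J the bilinear form (x, y) ↦ B(D(x), y) is a symplectic form on J. -/

import Mathlib

variable {K : Type*} [Field K] [CharZero K]
variable {J : Type*} [NonUnitalNonAssocCommRing J] [Module K J]
  [SMulCommClass K J J] [IsScalarTower K J J] [FiniteDimensional K J]

/-- A symplectic form on a Jordan algebra: a nondegenerate skew-symmetric bilinear form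
satisfying `ω(xy, z) + ω(yz, x) + ω(zx, y) = 0`. -/
def IsSymplecticForm (ω : J →ₗ[K] J →ₗ[K] K) : Prop :=
  (∀ x y : J, ω x y = -ω y x) ∧
  (∀ x : J, (∀ y : J, ω x y = 0) → x = 0) ∧
  (∀ x y z : J, ω (x * y) z + ω (y * z) x + ω (z * x) y = 0)

/-- Every bilinear form on a finite-dimensional space is represented by an endomorphism with
respect to a form with trivial left kernel. -/
theorem exists_bilinForm_comp_eq {F V : Type*} [Field F] [AddCommGroup V] [Module F V]
    [FiniteDimensional F V] (B ω : V →ₗ[F] V →ₗ[F] F)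
    (hB : ∀ x : V, (∀ y : V, B x y = 0) → x = 0) :
    ∃ D : V →ₗ[F] V, B ∘ₗ D = ω := by
  have hinj : Function.Injective B := (injective_iff_map_eq_zero B).2 fun x hx =>
    hB x fun y => by rw [hx, LinearMap.zero_apply]
  let e := LinearEquiv.ofInjectiveOfFinrankEq B hinj (Subspace.dual_finrank_eq (K := F)).symm
  refine ⟨e.symm.toLinearMap ∘ₗ ω, LinearMap.ext fun x => ?_⟩
  exact e.apply_symm_apply (ω x)

/-- a pseudo-euclidean Jordan algebra `(J, B)` admits a symplectic form iff it
has a bijective `B`-antisymmetric derivation; more precisely, every symplectic form `ω`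
arises as `ω(x, y) = B(D x, y)` for such a `D`, and conversely every such `D` yields a
symplectic form. -/
theorem symplectic_iff_invertible_antisymmetric_derivation
    (hjordan : ∀ x y : J, (x * y) * (x * x) = x * (y * (x * x)))
    (B : J →ₗ[K] J →ₗ[K] K)
    (hsymm : ∀ x y : J, B x y = B y x)
    (hnondeg : ∀ x : J, (∀ y : J, B x y = 0) → x = 0)
    (hassoc : ∀ x y z : J, B (x * y) z = B x (y * z)) :
    -- the equivalence
    ((∃ ω : J →ₗ[K] J →ₗ[K] K, IsSymplecticForm ω) ↔
      (∃ D : J →ₗ[K] J, Function.Bijective D ∧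
        (∀ x y : J, D (x * y) = D x * y + x * D y) ∧
        (∀ x y : J, B (D x) y = -B x (D y)))) ∧
    -- every symplectic form comes from such a derivation
    (∀ ω : J →ₗ[K] J →ₗ[K] K, IsSymplecticForm ω →
      ∃ D : J →ₗ[K] J, Function.Bijective D ∧
        (∀ x y : J, D (x * y) = D x * y + x * D y) ∧
        (∀ x y : J, B (D x) y = -B x (D y)) ∧
        (∀ x y : J, ω x y = B (D x) y)) ∧
    -- every such derivation gives a symplectic form
    (∀ D : J →ₗ[K] J, Function.Bijective D →
      (∀ x y : J, D (x * y) = D x * y + x * D y) →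
      (∀ x y : J, B (D x) y = -B x (D y)) →
      IsSymplecticForm (B ∘ₗ D)) := by
  have derivation_of_form : ∀ ω : J →ₗ[K] J →ₗ[K] K, IsSymplecticForm ω →
      ∃ D : J →ₗ[K] J, Function.Bijective D ∧
        (∀ x y : J, D (x * y) = D x * y + x * D y) ∧
        (∀ x y : J, B (D x) y = -B x (D y)) ∧
        (∀ x y : J, ω x y = B (D x) y) := by
    rintro ω ⟨hskew, hω, hcyc⟩
    obtain ⟨D, rfl⟩ := exists_bilinForm_comp_eq B ω hnondeg
    simp only [LinearMap.comp_apply] at hskew hω hcyc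
    have hinj : Function.Injective D := (injective_iff_map_eq_zero D).2 fun x hx =>
      hω x fun y => by rw [hx, map_zero, LinearMap.zero_apply]
    refine ⟨D, ⟨hinj, LinearMap.injective_iff_surjective.1 hinj⟩, fun x y => ?_,
      fun x y => by rw [hskew, hsymm], fun _ _ => rfl⟩
    refine sub_eq_zero.1 (hnondeg _ fun z => ?_)
    rw [map_sub, map_add, LinearMap.sub_apply, LinearMap.add_apply, mul_comm x (D y),
      hassoc, hassoc, mul_comm x z]
    linear_combination hcyc x y z - hskew (y * z) x - hskew (z * x) y
  have form_of_derivation : ∀ D : J →ₗ[K] J, Function.Bijective D →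
      (∀ x y : J, D (x * y) = D x * y + x * D y) →
      (∀ x y : J, B (D x) y = -B x (D y)) →
      IsSymplecticForm (B ∘ₗ D) := by
    intro D hbij hder hanti
    refine ⟨fun x y => ?_, fun x hx => ?_, fun x y z => ?_⟩
    · rw [LinearMap.comp_apply, LinearMap.comp_apply, hanti, hsymm]
    · exact (map_eq_zero_iff D hbij.injective).1 (hnondeg _ hx)
    · simp only [LinearMap.comp_apply]
      rw [hanti (y * z), hanti (z * x), hsymm (y * z), hsymm (z * x), ← hassoc, mul_comm z x,
        ← hassoc, hder, map_add, LinearMap.add_apply, mul_comm x (D y)]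
      ring
  refine ⟨⟨?_, ?_⟩, derivation_of_form, form_of_derivation⟩
  · rintro ⟨ω, hω⟩
    obtain ⟨D, hbij, hder, hanti, -⟩ := derivation_of_form ω hω
    exact ⟨D, hbij, hder, hanti⟩
  · rintro ⟨D, hbij, hder, hanti⟩
    exact ⟨B ∘ₗ D, form_of_derivation D hbij hder hanti⟩
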